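/- The FTR power CDF conditioned on θ satisfies: for the Rician Shadowed law with parameters m (positive integer), K_r ≥ 0, mean γ̄ > 0, F(x) = ((1+K_r)/γ̄)·x·(m/(m+K_r))^m · Φ₂(1-m, m; 2; -(1+K_r)x/γ̄, -(1+K_r)m x/(γ̄(m+K_r))), where Φ₂(b₁,b₂;c;x,y) = Σ_{i,j≥0} (b₁)_i (b₂)_j/((c)_{i+j} i! j!) x^i y^j is the bivariate confluent hypergeometric function. -/

import Mathlib

open Real MeasureTheory Set

noncomputable def poch (a : ℝ) (n : ℕ) : ℝ := (ascPochhammer ℝ n).eval a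

/-- Confluent hypergeometric function of the first kind (series). -/
noncomputable def hyp1F1 (a c z : ℝ) : ℝ :=
  ∑' k : ℕ, poch a k / (poch c k * (k.factorial : ℝ)) * z ^ k

/-- Bivariate confluent hypergeometric function Φ₂. -/
noncomputable def phi2 (b₁ b₂ c x y : ℝ) : ℝ :=
  ∑' p : ℕ × ℕ,
    poch b₁ p.1 * poch b₂ p.2 /
      (poch c (p.1 + p.2) * (p.1.factorial : ℝ) * (p.2.factorial : ℝ)) *
      x ^ p.1 * y ^ p.2


noncomputable def cc (b : ℝ) (k : ℕ) : ℝ := poch b k / (k.factorial : ℝ)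

lemma poch_succ (b : ℝ) (k : ℕ) : poch b (k + 1) = poch b k * (b + k) := by
  unfold poch; exact ascPochhammer_succ_eval k b

lemma poch_zero (b : ℝ) : poch b 0 = 1 := by simp [poch]

lemma poch_succ_left (b : ℝ) (k : ℕ) : poch b (k + 1) = b * poch (b + 1) k := by
  unfold poch; rw [ascPochhammer_succ_left]; simp

lemma poch_one (k : ℕ) : poch 1 k = (k.factorial : ℝ) := ascPochhammer_eval_one ℝ k

lemma poch_two (k : ℕ) : poch 2 k = ((k + 1).factorial : ℝ) := by
  have h := poch_succ_left 1 k
  rw [poch_one, one_mul] at h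
  rw [h]; norm_num

lemma cc_zero (b : ℝ) : cc b 0 = 1 := by simp [cc, poch_zero]

lemma cc_succ (b : ℝ) (k : ℕ) : cc b (k + 1) = cc b k * ((b + k) / (k + 1)) := by
  unfold cc
  rw [poch_succ, Nat.factorial_succ]
  push_cast
  have : (k.factorial : ℝ) ≠ 0 := by positivity
  have : (k : ℝ) + 1 ≠ 0 := by positivity
  field_simp

lemma cc_pascal (b : ℝ) (k : ℕ) : cc (b + 1) (k + 1) = cc b (k + 1) + cc (b + 1) k := by
  unfold cc
  rw [poch_succ (b + 1), poch_succ_left b, Nat.factorial_succ]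
  push_cast
  have : (k.factorial : ℝ) ≠ 0 := by positivity
  have : (k : ℝ) + 1 ≠ 0 := by positivity
  field_simp
  ring

lemma cc_one (k : ℕ) : cc 1 k = 1 := by
  unfold cc; rw [poch_one]; exact div_self (by positivity)

lemma cc_zero_succ (k : ℕ) : cc 0 (k + 1) = 0 := by
  unfold cc; rw [poch_succ_left]; simp

lemma cc_bound (b : ℝ) (k : ℕ) : |cc b k| ≤ (|b| + 1) ^ k := by
  induction k with
  | zero => simp [cc_zero]
  | succ k ih =>
    rw [cc_succ, abs_mul, pow_succ]
    refine mul_le_mul ih ?_ (abs_nonneg _) (by positivity)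
    rw [abs_div, abs_of_pos (by positivity : (0 : ℝ) < k + 1), div_le_iff₀ (by positivity)]
    have h1 := abs_add_le b (k : ℝ)
    have h2 : |(k : ℝ)| = k := abs_of_nonneg (by positivity)
    have h3 : 0 ≤ |b| * k := by positivity
    nlinarith

lemma cc_summable (b z : ℝ) :
    Summable fun k : ℕ => ‖cc b k / (k.factorial : ℝ) * z ^ k‖ := by
  refine Summable.of_nonneg_of_le (fun _ => norm_nonneg _) (fun k => ?_)
    (Real.summable_pow_div_factorial ((|b| + 1) * |z|))
  rw [Real.norm_eq_abs, abs_mul, abs_div, abs_pow, Nat.abs_cast, mul_pow, div_mul_eq_mul_div]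
  gcongr
  exact cc_bound b k

noncomputable def QQ (b u : ℝ) : PowerSeries ℝ := PowerSeries.mk fun k => cc b k * u ^ k

lemma QQ_step (b u : ℝ) :
    (1 - PowerSeries.C u * PowerSeries.X) * QQ (b + 1) u = QQ b u := by
  ext n
  rw [sub_mul, one_mul, mul_assoc, map_sub, PowerSeries.coeff_C_mul]
  cases n with
  | zero => simp [QQ, cc_zero]
  | succ n =>
    rw [PowerSeries.coeff_succ_X_mul]
    simp only [QQ, PowerSeries.coeff_mk]
    rw [cc_pascal]; ring

noncomputable def BB (b u w : ℝ) (n : ℕ) : ℝ :=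
  ∑ ij ∈ Finset.HasAntidiagonal.antidiagonal n, (n.choose ij.1 : ℝ) * (cc b ij.1 * w ^ ij.1 * u ^ ij.2)

lemma BB_step (b u w : ℝ) (n : ℕ) :
    BB (b + 1) u w (n + 1) - (u + w) * BB (b + 1) u w n = BB b u w (n + 1) - u * BB b u w n := by
  have key : ∀ b : ℝ, BB b u w (n + 1) = u * BB b u w n +
      ∑ ij ∈ Finset.HasAntidiagonal.antidiagonal n,
        (n.choose ij.1 : ℝ) * (cc b (ij.1 + 1) * w ^ (ij.1 + 1) * u ^ ij.2) := by
    intro b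
    unfold BB
    rw [Finset.sum_antidiagonal_choose_succ_mul (fun i j => cc b i * w ^ i * u ^ j) n,
      Finset.mul_sum]
    congr 1
    · refine Finset.sum_congr rfl fun ij _ => ?_
      ring
    · refine Finset.sum_congr rfl fun ij h => ?_
      rw [Finset.HasAntidiagonal.mem_antidiagonal] at h
      rw [Nat.choose_symm_of_eq_add (by omega : n = ij.2 + ij.1)]
  have h : ∑ ij ∈ Finset.HasAntidiagonal.antidiagonal n,
        (n.choose ij.1 : ℝ) * (cc (b + 1) (ij.1 + 1) * w ^ (ij.1 + 1) * u ^ ij.2) =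
      ∑ ij ∈ Finset.HasAntidiagonal.antidiagonal n,
        (n.choose ij.1 : ℝ) * (cc b (ij.1 + 1) * w ^ (ij.1 + 1) * u ^ ij.2) +
      w * BB (b + 1) u w n := by
    unfold BB
    rw [Finset.mul_sum, ← Finset.sum_add_distrib]
    refine Finset.sum_congr rfl fun ij _ => ?_
    rw [cc_pascal]; ring
  rw [key (b + 1), key b, h]; ring

lemma BB_zero (b u w : ℝ) : BB b u w 0 = 1 := by simp [BB, cc_zero]

lemma QB (m : ℕ) (u w : ℝ) :
    QQ (-m) u * QQ (m + 1) (u + w) = PowerSeries.mk (BB (m + 1) u w) := by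
  induction m with
  | zero =>
    have h0 : QQ (-((0 : ℕ) : ℝ)) u = 1 := by
      ext n
      cases n with
      | zero => simp [QQ, cc_zero]
      | succ n => simp [QQ, cc_zero_succ, PowerSeries.coeff_one]
    rw [h0, one_mul]
    ext n
    simp only [QQ, PowerSeries.coeff_mk, BB]
    simp only [Nat.cast_zero, zero_add, cc_one, one_mul]
    rw [add_comm u w, (Commute.all w u).add_pow']
    simp [nsmul_eq_mul]
  | succ m ih =>
    have hne : (1 - PowerSeries.C (u + w) * PowerSeries.X : PowerSeries ℝ) ≠ 0 := by
      intro h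
      have := congrArg (PowerSeries.coeff 0) h
      simp at this
    apply mul_left_cancel₀ hne
    have e1 := QQ_step (-((m + 1 : ℕ) : ℝ)) u
    have e2 := QQ_step (m + 1 : ℝ) (u + w)
    have e3 : -((m + 1 : ℕ) : ℝ) + 1 = -(m : ℝ) := by push_cast; ring
    rw [e3] at e1
    have e4 : ((m + 1 : ℕ) : ℝ) = (m : ℝ) + 1 := by push_cast; ring
    have e5 : (1 - PowerSeries.C (u + w) * PowerSeries.X) *
        (PowerSeries.mk (BB ((m + 1 : ℝ) + 1) u w)) =
        (1 - PowerSeries.C u * PowerSeries.X) * PowerSeries.mk (BB (m + 1 : ℝ) u w) := by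
      ext n
      rw [sub_mul, one_mul, mul_assoc, map_sub, PowerSeries.coeff_C_mul,
        sub_mul, one_mul, mul_assoc, map_sub, PowerSeries.coeff_C_mul]
      cases n with
      | zero => simp [BB_zero]
      | succ n =>
        rw [PowerSeries.coeff_succ_X_mul, PowerSeries.coeff_succ_X_mul]
        simp only [PowerSeries.coeff_mk]
        exact BB_step _ _ _ _
    rw [← e1, e4, e5, ← ih, ← e2]
    ring

lemma AB (m : ℕ) (hm : 0 < m) (u v : ℝ) (n : ℕ) :
    ∑ p ∈ Finset.HasAntidiagonal.antidiagonal n, cc (1 - m) p.1 * u ^ p.1 * (cc m p.2 * v ^ p.2) =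
      BB m u (v - u) n := by
  obtain ⟨k, rfl⟩ : ∃ k, m = k + 1 := ⟨m - 1, by omega⟩
  have h := congrArg (PowerSeries.coeff n) (QB k u (v - u))
  rw [PowerSeries.coeff_mul] at h
  simp only [QQ, PowerSeries.coeff_mk] at h
  have e : (1 : ℝ) - ((k + 1 : ℕ) : ℝ) = -k := by push_cast; ring
  have e' : ((k + 1 : ℕ) : ℝ) = (k : ℝ) + 1 := by push_cast; ring
  rw [e, e', ← h, add_sub_cancel]

lemma conv_eq (b u w t : ℝ) (n : ℕ) :
    ∑ p ∈ Finset.HasAntidiagonal.antidiagonal n,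
      (cc b p.1 / (p.1.factorial : ℝ) * (w * t) ^ p.1) * ((u * t) ^ p.2 / (p.2.factorial : ℝ)) =
      BB b u w n / (n.factorial : ℝ) * t ^ n := by
  unfold BB
  rw [Finset.sum_div, Finset.sum_mul]
  refine Finset.sum_congr rfl fun p h => ?_
  rw [Finset.HasAntidiagonal.mem_antidiagonal] at h
  subst h
  rw [Nat.cast_add_choose]
  have : (p.1.factorial : ℝ) ≠ 0 := by positivity
  have : (p.2.factorial : ℝ) ≠ 0 := by positivity
  have : ((p.1 + p.2).factorial : ℝ) ≠ 0 := by positivity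
  rw [mul_pow, mul_pow, pow_add]
  field_simp

lemma exp_summable (z : ℝ) : Summable fun k : ℕ => ‖z ^ k / (k.factorial : ℝ)‖ :=
  (Real.summable_pow_div_factorial z).norm

lemma BB_summable (b u w t : ℝ) :
    Summable fun n : ℕ => ‖BB b u w n / (n.factorial : ℝ) * t ^ n‖ := by
  have h := summable_norm_sum_mul_antidiagonal_of_summable_norm (cc_summable b (w * t))
    (exp_summable (u * t))
  simpa only [conv_eq] using h

lemma exp_hyp (b u w t : ℝ) :
    HasSum (fun n : ℕ => BB b u w n / (n.factorial : ℝ) * t ^ n)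
      (Real.exp (u * t) * hyp1F1 b 1 (w * t)) := by
  have h := tsum_mul_tsum_eq_tsum_sum_antidiagonal_of_summable_norm (cc_summable b (w * t))
    (exp_summable (u * t))
  simp only [conv_eq] at h
  have e1 : Real.exp (u * t) = ∑' k : ℕ, (u * t) ^ k / (k.factorial : ℝ) := by
    rw [Real.exp_eq_exp_ℝ, NormedSpace.exp_eq_tsum_div]
  have e2 : hyp1F1 b 1 (w * t) = ∑' k : ℕ, cc b k / (k.factorial : ℝ) * (w * t) ^ k := by
    unfold hyp1F1 cc
    refine tsum_congr fun k => ?_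
    rw [poch_one, div_div]
  rw [e1, e2, mul_comm, h]
  exact (BB_summable b u w t).of_norm.hasSum

lemma int_eq (b u w x : ℝ) (hx : 0 ≤ x) :
    (∫ t in (0 : ℝ)..x, Real.exp (u * t) * hyp1F1 b 1 (w * t)) =
      ∑' n : ℕ, x * (BB b u w n / ((n + 1).factorial : ℝ) * x ^ n) := by
  have h := intervalIntegral.hasSum_integral_of_dominated_convergence (μ := volume) (a := 0)
    (b := x) (F := fun (n : ℕ) (t : ℝ) => BB b u w n / (n.factorial : ℝ) * t ^ n)
    (f := fun t => Real.exp (u * t) * hyp1F1 b 1 (w * t))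
    (fun n _ => ‖BB b u w n / (n.factorial : ℝ) * x ^ n‖)
    (fun n => (by fun_prop : Continuous fun t : ℝ =>
      BB b u w n / (n.factorial : ℝ) * t ^ n).aestronglyMeasurable)
    (fun n => Filter.Eventually.of_forall fun t ht => by
      rw [uIoc_of_le hx] at ht
      rw [norm_mul, norm_mul, norm_pow, norm_pow]
      gcongr
      rw [Real.norm_of_nonneg ht.1.le, Real.norm_of_nonneg hx]
      exact ht.2)
    (Filter.Eventually.of_forall fun t _ => BB_summable b u w x)
    (by simp)
    (Filter.Eventually.of_forall fun t _ => exp_hyp b u w t)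
  rw [← h.tsum_eq]
  refine tsum_congr fun n => ?_
  rw [intervalIntegral.integral_const_mul, integral_pow, Nat.factorial_succ]
  have : (n.factorial : ℝ) ≠ 0 := by positivity
  have : (n : ℝ) + 1 ≠ 0 := by positivity
  push_cast
  field_simp
  ring

lemma phi2_eq (m : ℕ) (hm : 0 < m) (u v x : ℝ) :
    phi2 (1 - (m : ℝ)) m 2 (u * x) (v * x) =
      ∑' n : ℕ, (BB m u (v - u) n / ((n + 1).factorial : ℝ) * x ^ n) := by
  set F : ℕ × ℕ → ℝ := fun p => poch (1 - (m : ℝ)) p.1 * poch m p.2 /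
      (poch 2 (p.1 + p.2) * (p.1.factorial : ℝ) * (p.2.factorial : ℝ)) *
      (u * x) ^ p.1 * (v * x) ^ p.2 with hF
  have hF' : ∀ p : ℕ × ℕ, F p = cc (1 - m) p.1 * cc m p.2 / ((p.1 + p.2 + 1).factorial : ℝ) *
      (u * x) ^ p.1 * (v * x) ^ p.2 := by
    intro p
    simp only [hF, cc, poch_two]
    have : (p.1.factorial : ℝ) ≠ 0 := by positivity
    have : (p.2.factorial : ℝ) ≠ 0 := by positivity
    have : ((p.1 + p.2 + 1).factorial : ℝ) ≠ 0 := by positivity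
    field_simp
  have hs : Summable F := by
    refine Summable.of_norm_bounded ((cc_summable (1 - m) (u * x)).mul_of_nonneg
      (cc_summable m (v * x)) (fun _ => norm_nonneg _) (fun _ => norm_nonneg _)) fun p => ?_
    rw [hF' p, ← norm_mul]
    have hle : (p.1.factorial : ℝ) * p.2.factorial ≤ ((p.1 + p.2 + 1).factorial : ℝ) := by
      have h1 : p.1.factorial * p.2.factorial ≤ (p.1 + p.2).factorial :=
        Nat.le_of_dvd (Nat.factorial_pos _) (Nat.factorial_mul_factorial_dvd_factorial_add _ _)
      exact_mod_cast h1.trans (Nat.factorial_le (by omega))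
    have e : cc (1 - m) p.1 / (p.1.factorial : ℝ) * (u * x) ^ p.1 *
        (cc m p.2 / (p.2.factorial : ℝ) * (v * x) ^ p.2) =
        cc (1 - m) p.1 * cc m p.2 / ((p.1.factorial : ℝ) * p.2.factorial) *
      (u * x) ^ p.1 * (v * x) ^ p.2 := by
      field_simp
    rw [e]
    simp only [norm_mul, norm_div]
    simp only [RCLike.norm_natCast, ← norm_mul]
    gcongr
  have : phi2 (1 - (m : ℝ)) m 2 (u * x) (v * x) = ∑' p, F p := rfl
  rw [this, ← Finset.HasAntidiagonal.sigmaAntidiagonalEquivProd.tsum_eq F]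
  have hs' : Summable fun c : (n : ℕ) × ↥(Finset.HasAntidiagonal.antidiagonal n) =>
      F (Finset.HasAntidiagonal.sigmaAntidiagonalEquivProd c) :=
    (Equiv.summable_iff Finset.HasAntidiagonal.sigmaAntidiagonalEquivProd).mpr hs
  rw [Summable.tsum_sigma' (fun n => (hasSum_fintype _).summable) hs']
  refine tsum_congr fun n => ?_
  rw [tsum_fintype]
  have : ∑ b : Finset.HasAntidiagonal.antidiagonal n, F (b : ℕ × ℕ) = ∑ p ∈ Finset.HasAntidiagonal.antidiagonal n, F p :=
    Finset.sum_coe_sort (Finset.HasAntidiagonal.antidiagonal n) F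
  refine this.trans ?_
  rw [← AB m hm, Finset.sum_div, Finset.sum_mul]
  refine Finset.sum_congr rfl fun p h => ?_
  rw [Finset.HasAntidiagonal.mem_antidiagonal] at h
  subst h
  rw [hF', mul_pow, mul_pow, pow_add]
  ring

/-- CDF of the Rician Shadowed power law (positive integer `m`) in terms of Φ₂. -/
theorem stmt_18 (m : ℕ) (hm : 0 < m) (Kr γbar : ℝ) (hK : 0 ≤ Kr) (hγ : 0 < γbar) :
    ∀ x : ℝ, 0 ≤ x →
      (∫ t in (0:ℝ)..x,
          ((m : ℝ) / (m + Kr)) ^ m * ((1 + Kr) / γbar) * Real.exp (-(1 + Kr) * t / γbar) *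
            hyp1F1 m 1 (Kr * (1 + Kr) * t / (γbar * (m + Kr))))
        = ((1 + Kr) / γbar) * x * ((m : ℝ) / (m + Kr)) ^ m *
            phi2 (1 - (m : ℝ)) m 2 (-(1 + Kr) * x / γbar)
              (-(1 + Kr) * m * x / (γbar * (m + Kr))) := by
  intro x hx
  have hm' : (0 : ℝ) < m := by exact_mod_cast hm
  have hmK : (m : ℝ) + Kr ≠ 0 := by positivity
  set u : ℝ := -(1 + Kr) / γbar with hu
  set v : ℝ := -(1 + Kr) * m / (γbar * (m + Kr)) with hv
  have hw : Kr * (1 + Kr) / (γbar * (m + Kr)) = v - u := by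
    rw [hu, hv]; field_simp; ring
  have e1 : ∀ t : ℝ, -(1 + Kr) * t / γbar = u * t := fun t => by rw [hu]; ring
  have e2 : -(1 + Kr) * m * x / (γbar * (m + Kr)) = v * x := by rw [hv]; ring
  have e3 : ∀ t : ℝ, Kr * (1 + Kr) * t / (γbar * (m + Kr)) = (v - u) * t := fun t => by
    rw [← hw]; ring
  simp only [e1, e2, e3]
  rw [phi2_eq m hm]
  simp only [mul_assoc (((m : ℝ) / (m + Kr)) ^ m * ((1 + Kr) / γbar))]
  rw [intervalIntegral.integral_const_mul, int_eq _ _ _ _ hx, tsum_mul_left]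
  ring
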